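/- There exist two first-order structures S and S' in the language with one ternary relation symbol P, one binary relation symbol C and one unary relation symbol I such that S and S' are elementarily equivalent, both S and S' are completely representable, and the term algebras of S and S' (regarded as structures in the language with binary operations + and ;, unary operations − and ⁻, and a constant 1') are not elementarily equivalent. -/

import Mathlib

open FirstOrder FirstOrder.Language

/-- Relation symbols of the language of atom structures: a unary `I`,
a binary `C` and a ternary `P`. -/
inductive AtomRel : ℕ → Type
  | I : AtomRel 1
  | C : AtomRel 2
  | P : AtomRel 3

/-- The first-order language with one ternary relation symbol `P`, one binary
relation symbol `C` and one unary relation symbol `I`. -/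
def atomLang : FirstOrder.Language :=
  ⟨fun _ => Empty, AtomRel⟩

/-- Function symbols of the language of the term algebras: a constant `1'`,
unary symbols `−` (complement) and `⁻` (converse), binary symbols `+` and `;`. -/
inductive AlgFun : ℕ → Type
  | one : AlgFun 0
  | compl : AlgFun 1
  | conv : AlgFun 1
  | add : AlgFun 2
  | comp : AlgFun 2

/-- The first-order language with binary operations `+` and `;`, unary
operations `−` and `⁻`, and a constant `1'`. -/
def algLang : FirstOrder.Language :=
  ⟨AlgFun, fun _ => Empty⟩

section Generic

variable {M : Type} [atomLang.Structure M]

/-- The interpretation of the unary relation symbol `I`. -/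
def mI (a : M) : Prop := Structure.RelMap (L := atomLang) (AtomRel.I : atomLang.Relations 1) ![a]

/-- The interpretation of the binary relation symbol `C`. -/
def mC (a b : M) : Prop := Structure.RelMap (L := atomLang) (AtomRel.C : atomLang.Relations 2) ![a, b]

/-- The interpretation of the ternary relation symbol `P`. -/
def mP (a b c : M) : Prop := Structure.RelMap (L := atomLang) (AtomRel.P : atomLang.Relations 3) ![a, b, c]

/-- `X ; Y = {u : ∃ x ∈ X, y ∈ Y, P(x,y,u)}`. -/
def sComp (X Y : Set M) : Set M := {u | ∃ x ∈ X, ∃ y ∈ Y, mP x y u}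

/-- `X⁻ = {u : ∃ x ∈ X, C(x,u)}`. -/
def sConv (X : Set M) : Set M := {u | ∃ x ∈ X, mC x u}

/-- The set of elements satisfying `I`. -/
def idSet (M : Type) [atomLang.Structure M] : Set M := {a | mI a}

end Generic

/-- Membership in the term algebra: the smallest collection of subsets of `M`
containing all singletons and the set `I`, closed under binary union,
complementation, `;` and `⁻`. -/
inductive InTA (M : Type) [atomLang.Structure M] : Set M → Prop
  | sing (a : M) : InTA M {a}
  | idset : InTA M (idSet M)
  | union {X Y : Set M} : InTA M X → InTA M Y → InTA M (X ∪ Y)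
  | compl {X : Set M} : InTA M X → InTA M Xᶜ
  | comp {X Y : Set M} : InTA M X → InTA M Y → InTA M (sComp X Y)
  | conv {X : Set M} : InTA M X → InTA M (sConv X)

/-- The term algebra of an atom structure, as a type. -/
def TermAlg (M : Type) [atomLang.Structure M] : Type := {X : Set M // InTA M X}

/-- The term algebra as a structure in the language `algLang`:
`+` is union, `−` is complement, `;` and `⁻` are the operations defined from
`P` and `C`, and `1'` is the set `I`. -/
instance termAlgStructure (M : Type) [atomLang.Structure M] :
    algLang.Structure (TermAlg M) where
  funMap := fun {_} f v =>
    match f with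
    | .one => ⟨idSet M, InTA.idset⟩
    | .compl => ⟨(v 0).1ᶜ, InTA.compl (v 0).2⟩
    | .conv => ⟨sConv (v 0).1, InTA.conv (v 0).2⟩
    | .add => ⟨(v 0).1 ∪ (v 1).1, InTA.union (v 0).2 (v 1).2⟩
    | .comp => ⟨sComp (v 0).1 (v 1).1, InTA.comp (v 0).2 (v 1).2⟩
  RelMap := fun {_} r _ => r.elim

/-- `a` goes from `x` to `y` when `P(x,a,a)` and `P(a,y,a)`. -/
def goes {M : Type} [atomLang.Structure M] (a x y : M) : Prop := mP x a a ∧ mP a y a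

/-- `X` splits the pair `(x,y)` when some `a ∈ X` and some `b ∉ X` both go
from `x` to `y`. -/
def SplitsG {M : Type} [atomLang.Structure M] (X : Set M) (x y : M) : Prop :=
  ∃ a ∈ X, ∃ b ∉ X, goes a x y ∧ goes b x y

/-- The pair `(x,y)` is splitable when `x ≠ y` and at least two distinct
elements go from `x` to `y`. -/
def SplitableG {M : Type} [atomLang.Structure M] (x y : M) : Prop :=
  x ≠ y ∧ ∃ a b : M, a ≠ b ∧ goes a x y ∧ goes b x y

/-- Converse of a binary relation, as a set of pairs. -/
def relConv {U : Type} (R : Set (U × U)) : Set (U × U) := {p | (p.2, p.1) ∈ R}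

/-- Composition of binary relations, as sets of pairs. -/
def relComp {U : Type} (R T : Set (U × U)) : Set (U × U) :=
  {p | ∃ w, (p.1, w) ∈ R ∧ (w, p.2) ∈ T}

/-- An atom structure is completely representable. -/
def CompRep (M : Type) [atomLang.Structure M] : Prop :=
  ∃ (U : Type) (rep : M → Set (U × U)),
    (∀ a : M, (rep a).Nonempty) ∧
    (∀ a b : M, a ≠ b → Disjoint (rep a) (rep b)) ∧
    (⋃ a : M, rep a) = Set.univ ∧
    (∀ a : M, (mI a ↔ rep a ⊆ Set.diagonal U) ∧
      ((rep a ⊆ Set.diagonal U) ↔ (rep a ∩ Set.diagonal U).Nonempty)) ∧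
    (∀ a b : M, (mC a b ↔ rep b = relConv (rep a)) ∧
      ((rep b = relConv (rep a)) ↔ (rep b ∩ relConv (rep a)).Nonempty)) ∧
    (∀ a b c : M, (mP a b c ↔ rep c ⊆ relComp (rep a) (rep b)) ∧
      ((rep c ⊆ relComp (rep a) (rep b)) ↔ (rep c ∩ relComp (rep a) (rep b)).Nonempty))

/-!
Let `r` be an equivalence relation on `V` with finite classes of unbounded size, and take as atoms
the pairs of elements of `V`, with two atoms (of signs `0` and `1`) for each related pair. The atoms
of sign `1` starting at a given element form a finite set, which belongs to the term algebra and
separates all pairs of distinct parallel atoms starting there; the existence of such separating sets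
is a first-order property of the term algebra. An ultrapower has an infinite class. There every
element of the term algebra is preserved by the automorphisms fixing some finite set of atoms, and
among these is one that swaps two parallel atoms: change signs at an element of the class not
involved in the finite set. The ultrapower is still completely representable, because a
representation amounts to a labelling of the pairs of points by atoms, and labellings pass to
ultraproducts.
-/

section Relations

variable {M N : Type} [atomLang.Structure M] [atomLang.Structure N]

theorem relMap_I_iff_mI (v : Fin 1 → M) :
    Structure.RelMap (L := atomLang) (AtomRel.I : atomLang.Relations 1) v ↔ mI (v 0) := by
  rw [mI, ← FinVec.etaExpand_eq v]; rfl

theorem relMap_C_iff_mC (v : Fin 2 → M) :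
    Structure.RelMap (L := atomLang) (AtomRel.C : atomLang.Relations 2) v ↔ mC (v 0) (v 1) := by
  rw [mC, ← FinVec.etaExpand_eq v]; rfl

theorem relMap_P_iff_mP (v : Fin 3 → M) :
    Structure.RelMap (L := atomLang) (AtomRel.P : atomLang.Relations 3) v ↔
      mP (v 0) (v 1) (v 2) := by
  rw [mP, ← FinVec.etaExpand_eq v]; rfl

theorem mI_map_iff (f : M ≃[atomLang] N) (a : M) : mI (f a) ↔ mI a := by
  have h := f.map_rel (AtomRel.I : atomLang.Relations 1) ![a]
  rwa [relMap_I_iff_mI, relMap_I_iff_mI] at h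

theorem mC_map_iff (f : M ≃[atomLang] N) (a b : M) : mC (f a) (f b) ↔ mC a b := by
  have h := f.map_rel (AtomRel.C : atomLang.Relations 2) ![a, b]
  rwa [relMap_C_iff_mC, relMap_C_iff_mC] at h

theorem mP_map_iff (f : M ≃[atomLang] N) (a b c : M) : mP (f a) (f b) (f c) ↔ mP a b c := by
  have h := f.map_rel (AtomRel.P : atomLang.Relations 3) ![a, b, c]
  rwa [relMap_P_iff_mP, relMap_P_iff_mP] at h

end Relations

section Ultraproduct

variable {L : Language} {ι : Type*} (𝒰 : Ultrafilter ι) {M N : ι → Type*}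

/-- The class of a sequence in the ultraproduct. -/
abbrev productMk (x : ∀ i, M i) : (𝒰 : Filter ι).Product M := x

theorem productMk_eq_iff {x y : ∀ i, M i} :
    productMk 𝒰 x = productMk 𝒰 y ↔ ∀ᶠ i in 𝒰, x i = y i :=
  Quotient.eq

theorem productMk_surjective : Function.Surjective (productMk 𝒰 (M := M)) :=
  Quotient.mk_surjective

variable [∀ i, L.Structure (M i)] [∀ i, L.Structure (N i)]

theorem relMap_productMk {n : ℕ} (R : L.Relations n) (x : Fin n → ∀ i, M i) :
    Structure.RelMap R (fun k => productMk 𝒰 (x k)) ↔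
      ∀ᶠ i in 𝒰, Structure.RelMap R fun k => x k i :=
  relMap_quotient_mk' ((𝒰 : Filter ι).productSetoid M) R x

/-- The isomorphism of ultraproducts induced by a family of isomorphisms of the factors. -/
def ultraproductCongr (e : ∀ i, M i ≃[L] N i) :
    (𝒰 : Filter ι).Product M ≃[L] (𝒰 : Filter ι).Product N where
  toEquiv := Quotient.congr (Equiv.piCongrRight fun i => (e i).toEquiv) fun _ _ =>
    Filter.eventually_congr (.of_forall fun i => (e i).injective.eq_iff.symm)
  map_fun' f x := by
    induction x using Quotient.induction_on_pi with | _ x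
    refine (congrArg _ (Ultraproduct.funMap_cast f x)).trans
      (.trans ?_ (Ultraproduct.funMap_cast f fun k i => e i (x k i)).symm)
    exact (productMk_eq_iff 𝒰).2 (.of_forall fun i => (e i).map_fun f _)
  map_rel' R x := by
    induction x using Quotient.induction_on_pi with | _ x
    refine (relMap_productMk 𝒰 R fun k i => e i (x k i)).trans
      (.trans ?_ (relMap_productMk 𝒰 R x).symm)
    exact Filter.eventually_congr (.of_forall fun i => (e i).map_rel R _)

theorem ultraproductCongr_productMk (e : ∀ i, M i ≃[L] N i) (x : ∀ i, M i) :
    ultraproductCongr 𝒰 e (productMk 𝒰 x) = productMk 𝒰 fun i => e i (x i) :=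
  rfl

theorem elementarilyEquivalent_ultrapower (M : Type*) [L.Structure M] [Nonempty M] :
    L.ElementarilyEquivalent M ((𝒰 : Filter ι).Product fun _ => M) :=
  elementarilyEquivalent_iff.2 fun φ => by
    rw [Ultraproduct.sentence_realize, Filter.eventually_const]

end Ultraproduct

section AtomUltraproduct

variable {ι : Type} {𝒰 : Ultrafilter ι} {M : ι → Type} [∀ i, atomLang.Structure (M i)]

theorem mI_productMk (a : ∀ i, M i) : mI (productMk 𝒰 a) ↔ ∀ᶠ i in 𝒰, mI (a i) := by
  have h := relMap_productMk 𝒰 (L := atomLang) (AtomRel.I : atomLang.Relations 1) ![a]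
  simp only [relMap_I_iff_mI] at h
  exact h

theorem mC_productMk (a b : ∀ i, M i) :
    mC (productMk 𝒰 a) (productMk 𝒰 b) ↔ ∀ᶠ i in 𝒰, mC (a i) (b i) := by
  have h := relMap_productMk 𝒰 (L := atomLang) (AtomRel.C : atomLang.Relations 2) ![a, b]
  simp only [relMap_C_iff_mC] at h
  exact h

theorem mP_productMk (a b c : ∀ i, M i) :
    mP (productMk 𝒰 a) (productMk 𝒰 b) (productMk 𝒰 c) ↔ ∀ᶠ i in 𝒰, mP (a i) (b i) (c i) := by
  have h := relMap_productMk 𝒰 (L := atomLang) (AtomRel.P : atomLang.Relations 3) ![a, b, c]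
  simp only [relMap_P_iff_mP] at h
  exact h

theorem goes_productMk (a x y : ∀ i, M i) :
    goes (productMk 𝒰 a) (productMk 𝒰 x) (productMk 𝒰 y) ↔
      ∀ᶠ i in 𝒰, goes (a i) (x i) (y i) := by
  simp only [goes, mP_productMk, Filter.eventually_and]

end AtomUltraproduct

section Labelling

theorem subset_iff_inter_nonempty_of_forall_mem_iff {α : Type*} {S R : Set α} {p : Prop}
    (hS : S.Nonempty) (h : ∀ q ∈ S, (p ↔ q ∈ R)) :
    (p ↔ S ⊆ R) ∧ (S ⊆ R ↔ (S ∩ R).Nonempty) := by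
  obtain ⟨q₀, hq₀⟩ := hS
  have subset_of (hp : p) : S ⊆ R := fun q hq => (h q hq).1 hp
  exact ⟨⟨subset_of, fun hSR => (h q₀ hq₀).2 (hSR hq₀)⟩,
    fun hSR => ⟨q₀, hq₀, hSR hq₀⟩, fun ⟨q, hqS, hqR⟩ => subset_of ((h q hqS).2 hqR)⟩

/-- A complete representation of `M` over the base `U`, given as the labelling which sends a pair
to the unique atom whose representation contains it. -/
structure IsRepLabelling {U M : Type} [atomLang.Structure M] (κ : U → U → M) : Prop where
  exists_eq (a : M) : ∃ x y, κ x y = a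
  mI_iff (x y : U) : mI (κ x y) ↔ x = y
  mC_iff (x y : U) (b : M) : mC (κ x y) b ↔ κ y x = b
  mP_iff (x z : U) (a b : M) : mP a b (κ x z) ↔ ∃ y, κ x y = a ∧ κ y z = b

theorem IsRepLabelling.mC_symm {U M : Type} [atomLang.Structure M] {κ : U → U → M}
    (h : IsRepLabelling κ) {a b : M} (hab : mC a b) : mC b a := by
  obtain ⟨x, y, rfl⟩ := h.exists_eq a
  obtain rfl := (h.mC_iff x y b).1 hab
  exact (h.mC_iff y x _).2 rfl

theorem IsRepLabelling.compRep {U M : Type} [atomLang.Structure M] {κ : U → U → M}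
    (h : IsRepLabelling κ) : CompRep M := by
  let rep (a : M) : Set (U × U) := {q | κ q.1 q.2 = a}
  have rep_nonempty (a : M) : (rep a).Nonempty :=
    let ⟨x, y, hxy⟩ := h.exists_eq a; ⟨(x, y), hxy⟩
  have rep_eq_conv {a b : M} (hab : mC a b) : rep b = relConv (rep a) := by
    ext ⟨x, y⟩
    constructor
    · rintro rfl
      exact (h.mC_iff x y a).1 (h.mC_symm hab)
    · rintro rfl
      exact (h.mC_iff y x b).1 hab
  have mC_of_inter {a b : M} : (rep b ∩ relConv (rep a)).Nonempty → mC a b := by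
    rintro ⟨⟨x, y⟩, rfl, rfl⟩
    exact (h.mC_iff y x _).2 rfl
  have inter_of_eq {a b : M} (hab : rep b = relConv (rep a)) :
      (rep b ∩ relConv (rep a)).Nonempty := by
    simpa only [← hab, Set.inter_self] using rep_nonempty b
  refine ⟨U, rep, rep_nonempty, ?_, ?_, fun a => ?_, fun a b => ?_, fun a b c => ?_⟩
  · exact fun a b hab => Set.disjoint_left.2 fun q ha hb => hab (ha.symm.trans hb)
  · exact Set.eq_univ_of_forall fun q => Set.mem_iUnion.2 ⟨_, rfl⟩
  · refine subset_iff_inter_nonempty_of_forall_mem_iff (rep_nonempty a) ?_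
    rintro ⟨x, y⟩ rfl
    exact h.mI_iff x y
  · exact ⟨⟨rep_eq_conv, fun hab => mC_of_inter (inter_of_eq hab)⟩,
      inter_of_eq, fun hab => rep_eq_conv (mC_of_inter hab)⟩
  · refine subset_iff_inter_nonempty_of_forall_mem_iff (rep_nonempty c) ?_
    rintro ⟨x, z⟩ rfl
    exact h.mP_iff x z a b

theorem CompRep.exists_isRepLabelling {M : Type} [atomLang.Structure M] (h : CompRep M) :
    ∃ (U : Type) (κ : U → U → M), IsRepLabelling κ := by
  obtain ⟨U, rep, rep_nonempty, rep_disjoint, rep_cover, hI, hC, hP⟩ := h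
  have exists_mem (x y : U) : ∃ a, (x, y) ∈ rep a :=
    Set.mem_iUnion.1 (rep_cover ▸ Set.mem_univ (x, y))
  choose κ mem_rep using exists_mem
  have eq_iff (x y : U) (a : M) : κ x y = a ↔ (x, y) ∈ rep a :=
    ⟨fun e => e ▸ mem_rep x y, fun ha => by_contra fun hne =>
      Set.disjoint_left.1 (rep_disjoint _ _ hne) (mem_rep x y) ha⟩
  refine ⟨U, κ, fun a => ?_, fun x y => ?_, fun x y b => ?_, fun x z a b => ?_⟩
  · obtain ⟨⟨x, y⟩, ha⟩ := rep_nonempty a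
    exact ⟨x, y, (eq_iff x y a).2 ha⟩
  · exact ⟨fun hi => (hI _).1.1 hi (mem_rep x y),
      fun e => (hI _).1.2 ((hI _).2.2 ⟨(x, y), mem_rep x y, e⟩)⟩
  · rw [eq_iff]
    constructor
    · intro hc
      rw [(hC _ _).1.1 hc]
      exact mem_rep x y
    · exact fun hb => (hC _ _).1.2 ((hC _ _).2.2 ⟨(y, x), hb, mem_rep x y⟩)
  · simp only [eq_iff]
    exact ⟨fun hp => (hP _ _ _).1.1 hp (mem_rep x z),
      fun hab => (hP _ _ _).1.2 ((hP _ _ _).2.2 ⟨(x, z), mem_rep x z, hab⟩)⟩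

variable {ι : Type} {𝒰 : Ultrafilter ι} {M U : ι → Type} [∀ i, atomLang.Structure (M i)]

/-- The labelling of an ultraproduct of bases induced by a family of labellings. -/
def ultraproductLabelling (𝒰 : Ultrafilter ι) (κ : ∀ i, U i → U i → M i) :
    (𝒰 : Filter ι).Product U → (𝒰 : Filter ι).Product U → (𝒰 : Filter ι).Product M :=
  Quotient.map₂ (fun x y i => κ i (x i) (y i)) fun _ _ hx _ _ hy =>
    (hx.and hy).mono fun _ ⟨ex, ey⟩ => congrArg₂ _ ex ey

theorem IsRepLabelling.ultraproduct {κ : ∀ i, U i → U i → M i}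
    (h : ∀ i, IsRepLabelling (κ i)) : IsRepLabelling (ultraproductLabelling 𝒰 κ) where
  exists_eq a := by
    obtain ⟨a, rfl⟩ := productMk_surjective 𝒰 a
    choose x y hxy using fun i => (h i).exists_eq (a i)
    exact ⟨productMk 𝒰 x, productMk 𝒰 y, congrArg (productMk 𝒰) (funext hxy)⟩
  mI_iff x y := by
    obtain ⟨x, rfl⟩ := productMk_surjective 𝒰 x
    obtain ⟨y, rfl⟩ := productMk_surjective 𝒰 y
    refine (mI_productMk _).trans (.trans ?_ (productMk_eq_iff 𝒰).symm)
    simp only [(h _).mI_iff]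
  mC_iff x y b := by
    obtain ⟨x, rfl⟩ := productMk_surjective 𝒰 x
    obtain ⟨y, rfl⟩ := productMk_surjective 𝒰 y
    obtain ⟨b, rfl⟩ := productMk_surjective 𝒰 b
    refine (mC_productMk _ _).trans (.trans ?_ (productMk_eq_iff 𝒰).symm)
    simp only [(h _).mC_iff]
  mP_iff x z a b := by
    obtain ⟨x, rfl⟩ := productMk_surjective 𝒰 x
    obtain ⟨z, rfl⟩ := productMk_surjective 𝒰 z
    obtain ⟨a, rfl⟩ := productMk_surjective 𝒰 a
    obtain ⟨b, rfl⟩ := productMk_surjective 𝒰 b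
    have : ∀ i, Nonempty (U i) := fun i => ⟨x i⟩
    refine (mP_productMk _ _ _).trans (.trans ?_ (productMk_surjective 𝒰).exists.symm)
    simp only [(h _).mP_iff, Filter.skolem, Filter.eventually_and]
    exact exists_congr fun y => and_congr (productMk_eq_iff 𝒰).symm (productMk_eq_iff 𝒰).symm

theorem CompRep.ultraproduct (h : ∀ i, CompRep (M i)) : CompRep ((𝒰 : Filter ι).Product M) := by
  choose U κ hκ using fun i => (h i).exists_isRepLabelling
  exact (IsRepLabelling.ultraproduct hκ).compRep

end Labelling

section Support

variable {M : Type} [atomLang.Structure M]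

theorem InTA.empty [Nonempty M] : InTA M ∅ := by
  obtain ⟨a⟩ := ‹Nonempty M›
  simpa using ((InTA.sing a).union (InTA.sing a).compl).compl

theorem InTA.of_finite [Nonempty M] {X : Set M} (hX : X.Finite) : InTA M X := by
  induction X, hX using Set.Finite.induction_on with
  | empty => exact .empty
  | @insert a X _ _ ih => exact (InTA.sing a).union ih

theorem InTA.exists_finite_support {X : Set M} (hX : InTA M X) :
    ∃ F : Set M, F.Finite ∧
      ∀ f : M ≃[atomLang] M, (∀ a ∈ F, f a = a) → ∀ a, f a ∈ X ↔ a ∈ X := by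
  induction hX with
  | sing a =>
    refine ⟨{a}, Set.finite_singleton a, fun f hf b => ?_⟩
    have h : f b = f a ↔ b = a := f.injective.eq_iff
    rwa [hf a rfl] at h
  | idset => exact ⟨∅, Set.finite_empty, fun f _ a => mI_map_iff f a⟩
  | compl _ ih =>
    obtain ⟨F, hF, hX⟩ := ih
    exact ⟨F, hF, fun f hf a => not_congr (hX f hf a)⟩
  | conv _ ih =>
    obtain ⟨F, hF, hX⟩ := ih
    refine ⟨F, hF, fun f hf u => f.surjective.exists.trans ?_⟩
    exact exists_congr fun a => and_congr (hX f hf a) (mC_map_iff f a u)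
  | union _ _ ihX ihY =>
    obtain ⟨F, hF, hX⟩ := ihX
    obtain ⟨G, hG, hY⟩ := ihY
    refine ⟨F ∪ G, hF.union hG, fun f hf a => ?_⟩
    exact or_congr (hX f (fun b hb => hf b (.inl hb)) a) (hY f (fun b hb => hf b (.inr hb)) a)
  | comp _ _ ihX ihY =>
    obtain ⟨F, hF, hX⟩ := ihX
    obtain ⟨G, hG, hY⟩ := ihY
    refine ⟨F ∪ G, hF.union hG, fun f hf u => f.surjective.exists.trans ?_⟩
    refine exists_congr fun a => and_congr (hX f (fun b hb => hf b (.inl hb)) a) ?_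
    refine f.surjective.exists.trans (exists_congr fun b => ?_)
    exact and_congr (hY f (fun c hc => hf c (.inr hc)) b) (mP_map_iff f a b u)

end Support

section Splitters

variable (M : Type) [atomLang.Structure M]

/-- For each atom `x`, one element of the term algebra separates any two distinct parallel atoms
starting at `x`. -/
def HasSplitters : Prop :=
  ∀ x : M, ∃ X, InTA M X ∧ ∀ y a b, goes a x y → goes b x y → a ≠ b → ¬(a ∈ X ↔ b ∈ X)

variable {M}

/-- No `k` parameters suffice to define a set separating the parallel atoms starting at `x`,
because some automorphism fixing the parameters moves such an atom to a parallel one. -/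
def IsFlexible (k : ℕ) (x : M) : Prop :=
  ∀ F : Set M, F.encard ≤ k → ∃ f : M ≃[atomLang] M, (∀ a ∈ F, f a = a) ∧
    ∃ y a, goes a x y ∧ goes (f a) x y ∧ f a ≠ a

theorem not_hasSplitters_of_isFlexible {x : M} (hx : ∀ k, IsFlexible k x) :
    ¬HasSplitters M := by
  intro h
  obtain ⟨X, hX, separates⟩ := h x
  obtain ⟨F, hF, invariant⟩ := hX.exists_finite_support
  obtain ⟨f, hf, y, a, ha, hfa, hne⟩ := hx F.ncard F hF.cast_ncard_eq.ge
  exact separates y (f a) a hfa ha hne (invariant f hf a)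

theorem IsFlexible.ultraproduct {ι : Type} {𝒰 : Ultrafilter ι} {M : ι → Type}
    [∀ i, atomLang.Structure (M i)] {k : ℕ} {x : ∀ i, M i}
    (hx : ∀ᶠ i in 𝒰, IsFlexible k (x i)) : IsFlexible k (productMk 𝒰 x) := by
  intro F hF
  choose lift lift_spec using productMk_surjective 𝒰 (M := M)
  have eventually_moved : ∀ᶠ i in 𝒰, ∃ (f : M i ≃[atomLang] M i) (y a : M i),
      (∀ b ∈ (lift · i) '' F, f b = b) ∧ goes a (x i) y ∧ goes (f a) (x i) y ∧ f a ≠ a := by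
    filter_upwards [hx] with i hi
    obtain ⟨f, hf, y, a, h⟩ := hi _ ((Set.encard_image_le _ F).trans hF)
    exact ⟨f, y, a, hf, h⟩
  have : ∀ i, Nonempty (M i) := fun i => ⟨x i⟩
  have : ∀ i, Nonempty (M i ≃[atomLang] M i) := fun i => ⟨.refl _ _⟩
  simp only [Filter.skolem, Filter.eventually_and] at eventually_moved
  obtain ⟨f, y, a, hf, ha, hfa, hne⟩ := eventually_moved
  refine ⟨ultraproductCongr 𝒰 f, fun b hb => ?_, productMk 𝒰 y, productMk 𝒰 a,
    (goes_productMk a x y).2 ha, (goes_productMk _ x y).2 hfa, fun e => ?_⟩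
  · rw [← lift_spec b, ultraproductCongr_productMk, productMk_eq_iff]
    exact hf.mono fun i hi => hi _ ⟨b, hb, rfl⟩
  · obtain ⟨i, hne, e⟩ := (hne.and ((productMk_eq_iff 𝒰).1 e)).exists
    exact hne e

end Splitters

section Sentence

variable {α : Type} {n : ℕ}

/-- The term `t₁ + t₂`. -/
def addTerm (t₁ t₂ : algLang.Term α) : algLang.Term α :=
  .func (AlgFun.add : algLang.Functions 2) ![t₁, t₂]

/-- The term `−t`. -/
def complTerm (t : algLang.Term α) : algLang.Term α :=
  .func (AlgFun.compl : algLang.Functions 1) ![t]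

/-- The term `t₁ ; t₂`. -/
def compTerm (t₁ t₂ : algLang.Term α) : algLang.Term α :=
  .func (AlgFun.comp : algLang.Functions 2) ![t₁, t₂]

/-- The formula `t₁ + t₂ = t₂`, which expresses `t₁ ⊆ t₂` in the term algebra. -/
def leFormula (t₁ t₂ : algLang.Term (α ⊕ Fin n)) : algLang.BoundedFormula α n :=
  addTerm t₁ t₂ =' t₂

/-- The formula expressing that the last variable `z` is an atom of the term algebra: each `w`
satisfies precisely one of `z ⊆ w` and `z ⊆ −w`. -/
def isAtomFormula : algLang.BoundedFormula α (n + 1) :=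
  ∀' ∼(leFormula (&(Fin.last n).castSucc) (&(Fin.last (n + 1))) ⇔
    leFormula (&(Fin.last n).castSucc) (complTerm (&(Fin.last (n + 1)))))

/-- The quantification of `φ` over all atoms. -/
def allAtoms (φ : algLang.BoundedFormula α (n + 1)) : algLang.BoundedFormula α n :=
  ∀' (isAtomFormula ⟹ φ)

/-- The formula expressing `goes a x y` for atoms `a`, `x` and `y`. -/
def goesFormula (a x y : algLang.Term (α ⊕ Fin n)) : algLang.BoundedFormula α n :=
  leFormula a (compTerm x a) ⊓ leFormula a (compTerm a y)

/-- The sentence expressing `HasSplitters`; its variables are `x`, `X`, `y`, `a`, `b`. -/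
def splittersSentence : algLang.Sentence :=
  allAtoms (∃' allAtoms (allAtoms (allAtoms (goesFormula (&3) (&0) (&2) ⟹
    goesFormula (&4) (&0) (&2) ⟹ ∼(&3 =' &4) ⟹ ∼(leFormula (&3) (&1) ⇔ leFormula (&4) (&1))))))

variable {M : Type} [atomLang.Structure M] {v : α → TermAlg M} {xs : Fin n → TermAlg M}

/-- The atom of the term algebra given by an element of the atom structure. -/
def TermAlg.atom (a : M) : TermAlg M :=
  ⟨{a}, .sing a⟩

theorem realize_complTerm (t : algLang.Term α) :
    ((complTerm t).realize v).1 = (t.realize v).1ᶜ :=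
  rfl

theorem realize_compTerm (t₁ t₂ : algLang.Term α) :
    ((compTerm t₁ t₂).realize v).1 = sComp (t₁.realize v).1 (t₂.realize v).1 :=
  rfl

theorem realize_leFormula {t₁ t₂ : algLang.Term (α ⊕ Fin n)} :
    (leFormula t₁ t₂).Realize v xs ↔
      (t₁.realize (Sum.elim v xs)).1 ⊆ (t₂.realize (Sum.elim v xs)).1 := by
  rw [leFormula, BoundedFormula.realize_bdEqual]
  exact Subtype.ext_iff.trans Set.union_eq_right

theorem exists_eq_atom_iff {X : TermAlg M} :
    (∃ a, X = .atom a) ↔ ∀ W : TermAlg M, ¬(X.1 ⊆ W.1 ↔ X.1 ⊆ W.1ᶜ) := by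
  constructor
  · rintro ⟨a, rfl⟩ W
    simp [TermAlg.atom]
  · intro h
    have hX : X.1.Nonempty := by
      rw [Set.nonempty_iff_ne_empty]
      intro hX
      simpa [hX] using h X
    obtain ⟨a, ha⟩ := hX
    refine ⟨a, Subtype.ext (Set.Subset.antisymm ?_ (Set.singleton_subset_iff.2 ha))⟩
    have not_subset_compl : ¬X.1 ⊆ {a}ᶜ := fun hXa => hXa ha rfl
    have := h (.atom a)
    simpa [TermAlg.atom, not_subset_compl] using this

theorem realize_isAtomFormula {X : TermAlg M} :
    isAtomFormula.Realize v (Fin.snoc xs X) ↔ ∃ a, X = .atom a := by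
  simp only [isAtomFormula, BoundedFormula.realize_all, BoundedFormula.realize_not,
    BoundedFormula.realize_iff, realize_leFormula, realize_complTerm, Function.comp_apply,
    Term.realize_var, Sum.elim_inr, Fin.snoc_castSucc, Fin.snoc_last, exists_eq_atom_iff]

theorem realize_allAtoms {φ : algLang.BoundedFormula α (n + 1)} :
    (allAtoms φ).Realize v xs ↔ ∀ a : M, φ.Realize v (Fin.snoc xs (.atom a)) := by
  simp only [allAtoms, BoundedFormula.realize_all, BoundedFormula.realize_imp,
    realize_isAtomFormula, forall_exists_index, forall_eq_apply_imp_iff]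

theorem realize_goesFormula {s t u : algLang.Term (α ⊕ Fin n)} {a x y : M}
    (ha : s.realize (Sum.elim v xs) = .atom a) (hx : t.realize (Sum.elim v xs) = .atom x)
    (hy : u.realize (Sum.elim v xs) = .atom y) :
    (goesFormula s t u).Realize v xs ↔ goes a x y := by
  simp only [goesFormula, BoundedFormula.realize_inf, realize_leFormula, realize_compTerm, ha, hx,
    hy, TermAlg.atom, sComp, Set.singleton_subset_iff, Set.mem_ofPred_eq, Set.mem_singleton_iff,
    exists_eq_left, goes]

theorem realize_splittersSentence : TermAlg M ⊨ splittersSentence ↔ HasSplitters M := by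
  simp only [Sentence.Realize, Formula.Realize, splittersSentence, realize_allAtoms,
    BoundedFormula.realize_ex, BoundedFormula.realize_imp, BoundedFormula.realize_not,
    BoundedFormula.realize_iff, BoundedFormula.realize_bdEqual, realize_leFormula]
  refine forall_congr' fun x => .trans (exists_congr fun X => forall₃_congr fun y a b => ?_)
    ⟨fun ⟨X, h⟩ => ⟨X.1, X.2, h⟩, fun ⟨X, hX, h⟩ => ⟨⟨X, hX⟩, h⟩⟩
  rw [realize_goesFormula (a := a) (x := x) (y := y) rfl rfl rfl,
    realize_goesFormula (a := b) (x := x) (y := y) rfl rfl rfl]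
  refine imp_congr_right fun _ => imp_congr_right fun _ => imp_congr ?_ ?_
  · exact not_congr (Subtype.ext_iff.trans Set.singleton_eq_singleton_iff)
  · exact not_congr (iff_congr Set.singleton_subset_iff Set.singleton_subset_iff)

end Sentence

section PairOrbit

variable {V : Type} (r : Setoid V) (A : Type)

/-- The orbits of pairs of points of `V × A` under the maps `(x, i) ↦ (x, i + t x)` with
`t : V → A` constant on the classes of `r`. The orbit of `((x, i), (y, j))` has source `x`, target
`y` and, if these are related, shift `j - i`. As `shift` takes a proof of relatedness, there is
exactly one orbit with given unrelated source and target. -/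
structure PairOrbit where
  src : V
  tgt : V
  shift : r src tgt → A

namespace PairOrbit

variable {r A}

theorem ext {a b : PairOrbit r A} (hs : a.src = b.src) (ht : a.tgt = b.tgt)
    (h : ∀ ha hb, a.shift ha = b.shift hb) : a = b := by
  obtain ⟨x, y, s⟩ := a
  obtain ⟨_, _, t⟩ := b
  obtain rfl : x = _ := hs
  obtain rfl : y = _ := ht
  exact congrArg (mk x y) (funext fun h' => h h' h')

variable [AddCommGroup A]

/-- The atom structure of the algebra of unions of orbits. -/
instance : atomLang.Structure (PairOrbit r A) where
  funMap f := f.elim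
  RelMap R v :=
    match R with
    | .I => (v 0).src = (v 0).tgt ∧ ∀ h, (v 0).shift h = 0
    | .C => (v 1).src = (v 0).tgt ∧ (v 1).tgt = (v 0).src ∧
        ∀ h₀ h₁, (v 1).shift h₁ = -(v 0).shift h₀
    | .P => (v 0).tgt = (v 1).src ∧ (v 2).src = (v 0).src ∧ (v 2).tgt = (v 1).tgt ∧
        ∀ h₀ h₁ h₂, (v 2).shift h₂ = (v 0).shift h₀ + (v 1).shift h₁

theorem mI_iff {a : PairOrbit r A} : mI a ↔ a.src = a.tgt ∧ ∀ h, a.shift h = 0 :=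
  Iff.rfl

theorem mC_iff {a b : PairOrbit r A} :
    mC a b ↔ b.src = a.tgt ∧ b.tgt = a.src ∧ ∀ ha hb, b.shift hb = -a.shift ha :=
  Iff.rfl

theorem mP_iff {a b c : PairOrbit r A} :
    mP a b c ↔ a.tgt = b.src ∧ c.src = a.src ∧ c.tgt = b.tgt ∧
      ∀ ha hb hc, c.shift hc = a.shift ha + b.shift hb :=
  Iff.rfl

/-- The orbit of a pair of points of `V × A`. -/
def label (r : Setoid V) (p q : V × A) : PairOrbit r A :=
  ⟨p.1, q.1, fun _ => q.2 - p.2⟩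

theorem label_eq_iff {p q : V × A} {a : PairOrbit r A} :
    label r p q = a ↔ p.1 = a.src ∧ q.1 = a.tgt ∧ ∀ h, a.shift h = q.2 - p.2 := by
  constructor
  · rintro rfl
    exact ⟨rfl, rfl, fun _ => rfl⟩
  · rintro ⟨hs, ht, h⟩
    exact ext hs ht fun _ h' => (h h').symm

theorem exists_shift_eq (a : PairOrbit r A) : ∃ i, ∀ h, a.shift h = i := by
  by_cases h : r a.src a.tgt
  · exact ⟨a.shift h, fun _ => rfl⟩
  · exact ⟨0, fun h' => (h h').elim⟩

theorem mP_label_iff {p q : V × A} {a b : PairOrbit r A} :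
    mP a b (label r p q) ↔ a.tgt = b.src ∧ p.1 = a.src ∧ q.1 = b.tgt ∧
      ∀ ha hb, q.2 - p.2 = a.shift ha + b.shift hb := by
  refine mP_iff.trans (and_congr_right fun hab => and_congr_right fun (hs : p.1 = a.src) =>
    and_congr_right fun (ht : q.1 = b.tgt) => forall₂_congr fun ha hb => ?_)
  have related : r p.1 q.1 := hs ▸ ht ▸ r.trans ha (hab ▸ hb)
  exact forall_prop_of_true related

theorem isRepLabelling_label : IsRepLabelling (label r (A := A)) where
  exists_eq a := by
    obtain ⟨i, hi⟩ := a.exists_shift_eq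
    exact ⟨(a.src, 0), (a.tgt, i), label_eq_iff.2 ⟨rfl, rfl, fun h => by simp [hi]⟩⟩
  mI_iff p q := by
    rw [mI_iff, Prod.ext_iff]
    refine and_congr_right fun (e : p.1 = q.1) => ?_
    have related : r p.1 q.1 := e ▸ r.refl p.1
    exact (forall_prop_of_true related).trans (sub_eq_zero.trans eq_comm)
  mC_iff p q b := by
    rw [mC_iff, label_eq_iff, eq_comm (a := b.src), eq_comm (a := b.tgt)]
    refine and_congr_right fun hs => and_congr_right fun ht => ?_
    have related (h : r b.src b.tgt) : r p.1 q.1 := by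
      rw [← hs, ← ht] at h; exact r.symm h
    exact ⟨fun h hb => (h (related hb) hb).trans (neg_sub _ _),
      fun h _ hb => (h hb).trans (neg_sub _ _).symm⟩
  mP_iff p q a b := by
    simp only [mP_label_iff, label_eq_iff]
    constructor
    · rintro ⟨hab, hs, ht, h⟩
      by_cases ha : r a.src a.tgt
      · refine ⟨(a.tgt, p.2 + a.shift ha), ⟨hs, rfl, fun _ => by simp⟩, hab, ht, fun hb => ?_⟩
        rw [← sub_sub, h ha hb, add_sub_cancel_left]
      · obtain ⟨i, hi⟩ := b.exists_shift_eq
        exact ⟨(b.src, q.2 - i), ⟨hs, hab.symm, fun h => (ha h).elim⟩, rfl, ht, by simp [hi]⟩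
    · rintro ⟨w, ⟨hs, hwa, ha⟩, hwb, ht, hb⟩
      exact ⟨hwa.symm.trans hwb, hs, ht, fun h₁ h₂ => by rw [ha, hb, sub_add_sub_cancel']⟩

theorem compRep : CompRep (PairOrbit r A) :=
  isRepLabelling_label.compRep

/-- The permutation of the orbits induced by `(x, i) ↦ (x, i + δ x)`. -/
def twist (δ : V → A) : PairOrbit r A ≃[atomLang] PairOrbit r A where
  toFun a := ⟨a.src, a.tgt, fun h => a.shift h + (δ a.tgt - δ a.src)⟩
  invFun a := ⟨a.src, a.tgt, fun h => a.shift h - (δ a.tgt - δ a.src)⟩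
  left_inv a := ext rfl rfl fun _ _ => add_sub_cancel_right _ _
  right_inv a := ext rfl rfl fun _ _ => sub_add_cancel _ _
  map_fun' f := f.elim
  map_rel' R v := by
    cases R with
    | I =>
      simp only [relMap_I_iff_mI, mI_iff, Function.comp_apply]
      refine and_congr_right fun h => ?_
      simp only [h, sub_self, add_zero]
    | C =>
      simp only [relMap_C_iff_mC, mC_iff, Function.comp_apply]
      refine and_congr_right fun hs => and_congr_right fun ht => ?_
      simp only [hs, ht, neg_add, neg_sub, add_left_inj]
    | P =>
      simp only [relMap_P_iff_mP, mP_iff, Function.comp_apply]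
      refine and_congr_right fun h => and_congr_right fun hs => and_congr_right fun ht => ?_
      simp only [h, hs, ht, add_add_add_comm _ (_ - _), sub_add_sub_cancel', add_left_inj]

theorem twist_label (δ : V → A) (p q : V × A) :
    twist δ (label r p q) = label r (p.1, p.2 + δ p.1) (q.1, q.2 + δ q.1) :=
  ext rfl rfl fun _ _ => (add_sub_add_comm _ _ _ _).symm

theorem twist_eq_self {δ : V → A} {a : PairOrbit r A} (hs : δ a.src = 0) (ht : δ a.tgt = 0) :
    twist δ a = a :=
  ext rfl rfl fun h _ => by
    change a.shift h + (δ a.tgt - δ a.src) = a.shift h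
    rw [hs, ht, sub_self, add_zero]

/-- The orbit of the diagonal pairs over `x`. -/
def loop (r : Setoid V) (A : Type) [AddCommGroup A] (x : V) : PairOrbit r A :=
  label r (x, 0) (x, 0)

theorem goes_label (p q : V × A) : goes (label r p q) (loop r A p.1) (loop r A q.1) :=
  ⟨mP_label_iff.2 ⟨rfl, rfl, rfl, fun _ _ => by simp [loop, label]⟩,
    mP_label_iff.2 ⟨rfl, rfl, rfl, fun _ _ => by simp [loop, label]⟩⟩

theorem src_eq_of_goes {a x y : PairOrbit r A} (h : goes a x y) : a.src = x.src := h.1.2.1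

theorem tgt_eq_of_goes {a x y : PairOrbit r A} (h : goes a x y) : a.tgt = y.tgt := h.2.2.2.1

theorem hasSplitters (hr : ∀ x, {y | r x y}.Finite) :
    HasSplitters (PairOrbit r (ZMod 2)) := by
  intro x
  have : Nonempty (PairOrbit r (ZMod 2)) := ⟨x⟩
  let X : Set (PairOrbit r (ZMod 2)) := {a | a.src = x.src ∧ ∃ h, a.shift h = 1}
  have injOn_tgt : Set.InjOn tgt X := by
    rintro a ⟨ha, ha', ha₁⟩ b ⟨hb, hb', hb₁⟩ h
    exact ext (ha.trans hb.symm) h fun _ _ => ha₁.trans hb₁.symm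
  have mapsTo_tgt : Set.MapsTo tgt X {y | r x.src y} := by
    rintro a ⟨ha, ha', -⟩
    exact ha ▸ ha'
  refine ⟨X, .of_finite ((hr x.src).of_injOn mapsTo_tgt injOn_tgt), fun y a b ha hb hne h => hne ?_⟩
  have hs : a.src = b.src := (src_eq_of_goes ha).trans (src_eq_of_goes hb).symm
  have ht : a.tgt = b.tgt := (tgt_eq_of_goes ha).trans (tgt_eq_of_goes hb).symm
  refine ext hs ht fun ha' hb' => ?_
  have mem_iff {c} (hc : goes c x y) (hc' : r c.src c.tgt) : c ∈ X ↔ c.shift hc' = 1 :=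
    (and_iff_right (src_eq_of_goes hc)).trans (exists_prop_of_true hc')
  have eq_of_eq_one_iff : ∀ s t : ZMod 2, (s = 1 ↔ t = 1) → s = t := by decide
  exact eq_of_eq_one_iff _ _ ((mem_iff ha ha').symm.trans (h.trans (mem_iff hb hb')))

theorem isFlexible_loop [Nontrivial A] {k : ℕ} {x : V}
    (hk : (2 * k + 1 : ℕ) < {y | r x y}.encard) : IsFlexible k (loop r A x) := by
  classical
  intro F hF
  obtain ⟨y, hxy, hy⟩ : ∃ y, r x y ∧ y ∉ insert x (src '' F ∪ tgt '' F) := by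
    by_contra! h
    refine hk.not_ge ((Set.encard_le_encard h).trans ?_)
    calc (insert x (src '' F ∪ tgt '' F)).encard
        ≤ (src '' F).encard + (tgt '' F).encard + 1 :=
          (Set.encard_insert_le _ _).trans (by gcongr; exact Set.encard_union_le _ _)
      _ ≤ k + k + 1 := by
          gcongr <;> exact (Set.encard_image_le _ F).trans hF
      _ = (2 * k + 1 : ℕ) := by norm_cast; ring
  simp only [Set.mem_insert_iff, Set.mem_union, Set.mem_image, not_or, not_exists, not_and] at hy
  obtain ⟨hyx, hsrc, htgt⟩ := hy
  obtain ⟨c, hc⟩ := exists_ne (0 : A)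
  have twist_path : twist (Pi.single y c) (label r (x, 0) (y, 0)) = label r (x, 0) (y, c) := by
    simp [twist_label, Ne.symm hyx]
  refine ⟨twist (Pi.single y c), fun a ha => ?_, loop r A y, label r (x, 0) (y, 0),
    goes_label _ _, twist_path ▸ goes_label _ _, fun e => hc ?_⟩
  · exact twist_eq_self (Pi.single_eq_of_ne (M := fun _ => A) (hsrc a ha) c)
      (Pi.single_eq_of_ne (M := fun _ => A) (htgt a ha) c)
  · have := (label_eq_iff.1 (twist_path.symm.trans e)).2.2 hxy
    simpa [label] using this.symm

end PairOrbit

end PairOrbit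

section Example

/-- The equivalence relation on `Σ n, Fin (n + 1)` whose classes are the summands; they are finite
of unbounded size. -/
abbrev sameSummand : Setoid (Σ n : ℕ, Fin (n + 1)) :=
  Setoid.ker Sigma.fst

theorem encard_sameSummand (x : Σ n : ℕ, Fin (n + 1)) :
    {y | sameSummand x y}.encard = (x.1 + 1 : ℕ) := by
  have class_eq : {y | sameSummand x y} = Set.range (Sigma.mk x.1) := by
    rw [Set.range_sigmaMk]
    exact Set.ext fun _ => eq_comm
  rw [class_eq, ← Set.image_univ, sigma_mk_injective.encard_image, Set.encard_univ,
    ENat.card_eq_coe_fintype_card, Fintype.card_fin]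

theorem hasSplitters_sameSummand : HasSplitters (PairOrbit sameSummand (ZMod 2)) :=
  PairOrbit.hasSplitters fun x => Set.finite_of_encard_eq_coe (encard_sameSummand x)

theorem eventually_isFlexible_sameSummand (A : Type) [AddCommGroup A] [Nontrivial A] (k : ℕ) :
    ∀ᶠ n in .atTop, IsFlexible k (PairOrbit.loop sameSummand A ⟨n, 0⟩) := by
  filter_upwards [Filter.eventually_gt_atTop (2 * k)] with n hn
  refine PairOrbit.isFlexible_loop ?_
  rw [encard_sameSummand]
  exact_mod_cast Nat.succ_lt_succ hn

end Example

/-- There exist two first-order structures `S` and `S'` in the language with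
one ternary relation symbol `P`, one binary relation symbol `C` and one unary
relation symbol `I` such that `S` and `S'` are elementarily equivalent, both
are completely representable, but their term algebras (as structures in the
language with `+`, `;`, `−`, `⁻` and `1'`) are not elementarily equivalent. -/
theorem stmt_0 :
    ∃ (S S' : Type) (iS : atomLang.Structure S) (iS' : atomLang.Structure S'),
      (@FirstOrder.Language.ElementarilyEquivalent atomLang S S' iS iS') ∧
      (@CompRep S iS) ∧ (@CompRep S' iS') ∧
      ¬ (@FirstOrder.Language.ElementarilyEquivalent algLang
          (TermAlg S) (TermAlg S')
          (@termAlgStructure S iS) (@termAlgStructure S' iS')) := by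
  let S := PairOrbit sameSummand (ZMod 2)
  let 𝒰 : Ultrafilter ℕ := Filter.hyperfilter ℕ
  have : Nonempty S := ⟨PairOrbit.loop _ _ ⟨0, 0⟩⟩
  refine ⟨S, (𝒰 : Filter ℕ).Product fun _ => S, inferInstance, inferInstance,
    elementarilyEquivalent_ultrapower 𝒰 S, PairOrbit.compRep,
    .ultraproduct fun _ => PairOrbit.compRep, fun equiv => ?_⟩
  have transfer := elementarilyEquivalent_iff.1 equiv splittersSentence
  rw [realize_splittersSentence, realize_splittersSentence] at transfer
  have isFlexible (k : ℕ) :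
      IsFlexible k (productMk 𝒰 fun n => PairOrbit.loop sameSummand (ZMod 2) ⟨n, 0⟩) :=
    .ultraproduct ((eventually_isFlexible_sameSummand (ZMod 2) k).filter_mono
      Nat.hyperfilter_le_atTop)
  exact not_hasSplitters_of_isFlexible isFlexible (transfer.1 hasSplitters_sameSummand)
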